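/- Let 0 < d < n and let Ω ⊂ ℝⁿ be a nonempty proper open set whose boundary ∂Ω is d-Ahlfors regular with constant A. Let x ∈ ∂Ω, 0 < c < 1, and 0 ≤ ϱ < r < 2·diam ∂Ω. Set A₀ = Ω ∩ B(x,r) ∖ B(x,ϱ) and Ψ = Ω ∩ B(x, r/(1−c)) ∖ B(x, ϱ/(1+c)). Let ς, s ∈ ℝ and suppose either [1 ≤ β = p ≤ ∞ and ς ≤ s] or [1 ≤ β < p ≤ ∞ and ς < s]. Then for every F ∈ L^β_loc(Ω), (∫_{A₀} |F|^β δ^{d−n+β−βς})^{1/β} ≤ C·r^{d/β − d/p − ς + s}·‖F‖_{L^p_{av,c,β,s}(Ψ;Ω)}, provided the right-hand side is finite, where C depends only on A, n, d, c, β, p, s and ς. -/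

import Mathlib

open MeasureTheory Metric Set Filter
open scoped ENNReal NNReal Topology RealInnerProductSpace

noncomputable section

namespace Paper

/-- Euclidean space `ℝⁿ`. -/
abbrev Euc (n : ℕ) : Type := EuclideanSpace ℝ (Fin n)

variable {n : ℕ}

/-- `δ(x)`: the distance from `x` to the boundary of `Ω`. -/
def bd (Ω : Set (Euc n)) (x : Euc n) : ℝ := Metric.infDist x (frontier Ω)

/-- `σ`: the `d`-dimensional Hausdorff measure on `ℝⁿ`. -/
def hm (n : ℕ) (d : ℝ) : Measure (Euc n) := μH[d]

/-- `Γ ⊆ ℝⁿ` is `d`-Ahlfors regular with constant `A`: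
`(1/A) rᵈ ≤ σ(B(ξ,r) ∩ Γ) ≤ A rᵈ` for all `ξ ∈ Γ` and `0 < r ≤ diam Γ`. -/
def AhlforsRegular (d A : ℝ) (Γ : Set (Euc n)) : Prop :=
  Γ.Nonempty ∧ 0 < A ∧
    ∀ ξ ∈ Γ, ∀ r : ℝ, 0 < r → ENNReal.ofReal r ≤ EMetric.diam Γ →
      ENNReal.ofReal (r ^ d / A) ≤ hm n d (Metric.ball ξ r ∩ Γ) ∧
        hm n d (Metric.ball ξ r ∩ Γ) ≤ ENNReal.ofReal (A * r ^ d)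

/-- A `λ`-carrot path from `x ∈ ∂Ω` to `y ∈ Ω`: a rectifiable curve, parameterized by
arc length (hence `1`-Lipschitz), from `x` to `y`, staying in `Ω ∪ {x}`, with
`δ(ζ(t)) ≥ λ t`. -/
def IsCarrotPath (Ω : Set (Euc n)) (lam : ℝ) (x y : Euc n) : Prop :=
  ∃ (T : ℝ) (ζ : ℝ → Euc n), 0 ≤ T ∧ ζ 0 = x ∧ ζ T = y ∧
    LipschitzOnWith 1 ζ (Set.Icc 0 T) ∧
    (∀ t ∈ Set.Icc (0 : ℝ) T, ζ t ∈ Ω ∪ {x}) ∧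
    (∀ t ∈ Set.Icc (0 : ℝ) T, lam * t ≤ bd Ω (ζ t))

/-- `y ∈ Ω` is a `(θ,λ,N)`-weak local John point. -/
def IsWLJPoint (Ω : Set (Euc n)) (d θ lam N : ℝ) (y : Euc n) : Prop :=
  ∃ F : Set (Euc n), MeasurableSet F ∧
    F ⊆ Metric.ball y (N * bd Ω y) ∩ frontier Ω ∧
    ENNReal.ofReal θ * hm n d (Metric.ball y (N * bd Ω y) ∩ frontier Ω) ≤ hm n d F ∧
    ∀ x ∈ F, IsCarrotPath Ω lam x y

/-- The weak local John condition with specified parameters. -/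
def WeakLocalJohnWith (Ω : Set (Euc n)) (d θ lam N : ℝ) : Prop :=
  0 < θ ∧ θ ≤ 1 ∧ 0 < lam ∧ lam ≤ 1 ∧ 2 ≤ N ∧ ∀ y ∈ Ω, IsWLJPoint Ω d θ lam N y

/-- `Ω` is a weak local John domain. -/
def WeakLocalJohn (Ω : Set (Euc n)) (d : ℝ) : Prop :=
  ∃ θ lam N : ℝ, WeakLocalJohnWith Ω d θ lam N

/-- The interior corkscrew condition. -/
def InteriorCorkscrew (Ω : Set (Euc n)) : Prop :=
  ∃ ε : ℝ, 0 < ε ∧ ε < 1 ∧ ∀ x ∈ frontier Ω, ∀ r : ℝ, 0 < r →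
    ENNReal.ofReal r < EMetric.diam Ω →
    ∃ z : Euc n, z ∈ Metric.ball x r ∧ Metric.ball z (ε * r) ⊆ Ω

/-- The Harnack chain condition. -/
def HarnackChainCond (Ω : Set (Euc n)) : Prop :=
  ∃ (M m : ℝ) (Nf : ℝ → ℕ), 1 ≤ M ∧ 0 < m ∧ m < 1 ∧
    ∀ x ∈ Ω, ∀ y ∈ Ω,
      ∃ (N : ℕ) (c : Fin (N + 1) → Euc n) (r : Fin (N + 1) → ℝ),
        N ≤ Nf (dist x y / min (bd Ω x) (bd Ω y)) ∧
        x ∈ Metric.ball (c 0) (r 0) ∧ y ∈ Metric.ball (c (Fin.last N)) (r (Fin.last N)) ∧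
        (∀ i : Fin N,
          (Metric.ball (c i.castSucc) (r i.castSucc) ∩ Metric.ball (c i.succ) (r i.succ)).Nonempty) ∧
        ∀ i : Fin (N + 1), 0 < r i ∧ Metric.ball (c i) (r i) ⊆ Ω ∧
          m * (2 * r i) ≤ bd Ω (c i) - r i ∧ bd Ω (c i) - r i ≤ M * (2 * r i)

/-- The weighted ellipticity conditions
`λ δ(x)^{d+1-n} |ξ|² ≤ ξ·A(x)ξ` and `|η·A(x)ξ| ≤ Λ δ(x)^{d+1-n} |ξ||η|` on `Ω`. -/
def WeaklyElliptic (Ω : Set (Euc n)) (d lam Lam : ℝ)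
    (A : Euc n → Euc n →L[ℝ] Euc n) : Prop :=
  0 < lam ∧ lam ≤ Lam ∧ (∀ v : Euc n, Measurable fun x => A x v) ∧
    ∀ x ∈ Ω, ∀ ξ η : Euc n,
      lam * bd Ω x ^ (d + 1 - (n : ℝ)) * ‖ξ‖ ^ 2 ≤ ⟪ξ, A x ξ⟫ ∧
      |⟪η, A x ξ⟫| ≤ Lam * bd Ω x ^ (d + 1 - (n : ℝ)) * ‖ξ‖ * ‖η‖

/-- A test function on the open set `Ψ`: smooth, compactly supported, support inside `Ψ`. -/
def IsTestOn (Ψ : Set (Euc n)) (φ : Euc n → ℝ) : Prop :=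
  ContDiff ℝ (⊤ : ℕ∞) φ ∧ HasCompactSupport φ ∧ tsupport φ ⊆ Ψ

/-- `g` is the weak gradient of `u` on `Ψ`:
`∫_Ψ u ∂ᵥφ = −∫_Ψ ⟪g,v⟫ φ` for all test functions `φ` and directions `v`. -/
def HasWeakGradOn (u : Euc n → ℝ) (g : Euc n → Euc n) (Ψ : Set (Euc n)) : Prop :=
  LocallyIntegrableOn u Ψ volume ∧ LocallyIntegrableOn g Ψ volume ∧
    ∀ φ : Euc n → ℝ, IsTestOn Ψ φ → ∀ v : Euc n,
      (∫ x in Ψ, u x * fderiv ℝ φ x v) = -∫ x in Ψ, ⟪g x, v⟫ * φ x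

/-- Weak formulation of `− div A ∇u = − div H` in `Ψ`, where `g` is the weak gradient
of `u`. -/
def WeakSolOn (Ψ : Set (Euc n)) (A : Euc n → Euc n →L[ℝ] Euc n)
    (u : Euc n → ℝ) (g H : Euc n → Euc n) : Prop :=
  HasWeakGradOn u g Ψ ∧ LocallyIntegrableOn H Ψ volume ∧
    ∀ φ : Euc n → ℝ, IsTestOn Ψ φ →
      (∫ x in Ψ, ⟪gradient φ x, A x (g x)⟫) = ∫ x in Ψ, ⟪gradient φ x, H x⟫

/-- `Tr u(ξ) = 0` in the averaged sense: `r^{-n} ∫_{B(ξ,r)∩Ω} |u| → 0` as `r → 0⁺`. -/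
def TrZeroAt (Ω : Set (Euc n)) (u : Euc n → ℝ) (ξ : Euc n) : Prop :=
  Tendsto (fun r : ℝ => (1 / r ^ n) * ∫ x in Metric.ball ξ r ∩ Ω, |u x|)
    (𝓝[>] 0) (𝓝 0)

/-- The Whitney average `W_{c,β} f (y) = (⨍_{B(y, c δ(y))} |f|^β)^{1/β}`
(essential supremum if `β = ∞`), as an extended nonnegative real. -/
def wAvg (Ω : Set (Euc n)) (c : ℝ) (β : ℝ≥0∞) {F : Type*} [NormedAddCommGroup F]
    (f : Euc n → F) (y : Euc n) : ℝ≥0∞ :=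
  eLpNorm f β
    ((volume (Metric.ball y (c * bd Ω y)))⁻¹ • volume.restrict (Metric.ball y (c * bd Ω y)))

/-- The weighted averaged norm `‖f‖_{L^p_{av,c,β,s}(Ψ;Ω)}`:
`(∫_Ψ (W_{c,β}f)^p δ^{d-n+p-ps})^{1/p}`, `sup_Ψ (W_{c,β}f) δ^{1-s}` if `p = ∞`. -/
def avNormOn (Ω Ψ : Set (Euc n)) (d c : ℝ) (β p : ℝ≥0∞) (s : ℝ)
    {F : Type*} [NormedAddCommGroup F] (f : Euc n → F) : ℝ≥0∞ :=
  if p = ⊤ then ⨆ y ∈ Ψ, wAvg Ω c β f y * ENNReal.ofReal (bd Ω y) ^ (1 - s)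
  else (∫⁻ y in Ψ, wAvg Ω c β f y ^ p.toReal *
      ENNReal.ofReal (bd Ω y) ^ (d - n + p.toReal - p.toReal * s)) ^ (1 / p.toReal)

/-- The weighted averaged norm `‖f‖_{L^p_{av,c,β,s}(Ω)}`. -/
def avNorm (Ω : Set (Euc n)) (d c : ℝ) (β p : ℝ≥0∞) (s : ℝ)
    {F : Type*} [NormedAddCommGroup F] (f : Euc n → F) : ℝ≥0∞ :=
  avNormOn Ω Ω d c β p s f

/-- `f ∈ L^β_loc(Ω)`. -/
def MemLLoc (Ω : Set (Euc n)) (β : ℝ≥0∞) {F : Type*} [NormedAddCommGroup F]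
    (f : Euc n → F) : Prop :=
  AEStronglyMeasurable f (volume.restrict Ω) ∧
    ∀ K : Set (Euc n), K ⊆ Ω → IsCompact K → eLpNorm f β (volume.restrict K) < ⊤

/-- The nontangential cone `γ_a(ξ) = {x ∈ Ω : |x − ξ| < (1+a) δ(x)}`. -/
def ntCone (Ω : Set (Euc n)) (a : ℝ) (ξ : Euc n) : Set (Euc n) :=
  {x | x ∈ Ω ∧ dist x ξ < (1 + a) * bd Ω x}

/-- The nontangential maximal function `N_a f (ξ) = esssup_{γ_a(ξ)} |f|`. -/
def ntMax (Ω : Set (Euc n)) (a : ℝ) {F : Type*} [NormedAddCommGroup F]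
    (f : Euc n → F) (ξ : Euc n) : ℝ≥0∞ :=
  essSup (fun x => (‖f x‖₊ : ℝ≥0∞)) (volume.restrict (ntCone Ω a ξ))

/-- The `L^q` norm of an `ℝ≥0∞`-valued function. -/
def lqNormE (q : ℝ≥0∞) {α : Type*} [MeasurableSpace α] (μ : Measure α)
    (f : α → ℝ≥0∞) : ℝ≥0∞ :=
  if q = ⊤ then essSup f μ else (∫⁻ x, f x ^ q.toReal ∂μ) ^ (1 / q.toReal)

/-- `Tr_{a,c} u (x) = U`: `x` is in the closure of its nontangential cone, and the
Whitney averages of `|u − U|` tend to `0` nontangentially. -/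
def HasNTTrace (Ω : Set (Euc n)) (a c : ℝ) (u : Euc n → ℝ) (x : Euc n) (U : ℝ) : Prop :=
  x ∈ closure (ntCone Ω a x) ∧
    Tendsto (fun y => wAvg Ω c 1 (fun z => u z - U) y) (𝓝[ntCone Ω a x] x) (𝓝 0)


/-- The weighted (unaveraged) `L^β` quantity `(∫_A |F|^β δ^{d-n+β-βς})^{1/β}` on `A ⊆ Ω`
(weighted essential supremum when `β = ∞`). -/
def wLb (Ω A : Set (Euc n)) (d : ℝ) (β : ℝ≥0∞) (ς : ℝ) (F : Euc n → ℝ) : ℝ≥0∞ :=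
  if β = ⊤ then
    essSup (fun x => (‖F x‖₊ : ℝ≥0∞) * ENNReal.ofReal (bd Ω x) ^ (1 - ς))
      (volume.restrict A)
  else
    (∫⁻ x in A, (‖F x‖₊ : ℝ≥0∞) ^ β.toReal *
        ENNReal.ofReal (bd Ω x) ^ (d - (n : ℝ) + β.toReal - β.toReal * ς)) ^ (1 / β.toReal)

/-! Put `δ = dist(·, ∂Ω)`. On a ball `B(z, c' δ(z))` with `c' = c / (1 + c)` the distance `δ` is
comparable to `δ(z)`, and `z` lies in `B(y, c δ(y))` for each of its points `y`. By Tonelli the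
weighted `L^β` norm of `F` on a set `S` is therefore controlled by that of its Whitney averages on
any `Ψ` containing the balls with `z ∈ S`. If `β = p`, passing from `s` to `ς` costs only the
supremum of `δ^{s-ς}`. If `β < p`, it is Hölder's inequality for the measure `δ^{d-n} dy`, and costs
the norm of `δ^{s-ς}` on `Ω ∩ B(x, R)`, a root of `∫_{Ω ∩ B(x, R)} δ^{d-n+κ}` with `κ > 0`. This
integral is at most `C R^{d+κ}`: by Ahlfors regularity `δ(y)^d ≲ σ(B(y, 2 δ(y)))`, and exchanging
the integrals in `y` and `σ` leaves radial integrals of `|y - ξ|^{κ-n}` over balls of radius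
`2 R`. -/

theorem inv_le_mul_inv {a b K : ℝ≥0∞} (hK₀ : K ≠ 0) (hK : K ≠ ⊤) (h : b ≤ K * a) :
    a⁻¹ ≤ K * b⁻¹ :=
  calc a⁻¹ = K * (K * a)⁻¹ := by
        rw [ENNReal.mul_inv (.inl hK₀) (.inl hK), ← mul_assoc, ENNReal.mul_inv_cancel hK₀ hK,
          one_mul]
    _ ≤ K * b⁻¹ := by gcongr

theorem rpow_le_rpow_abs_mul_rpow {a b K : ℝ≥0∞} (hK₀ : K ≠ 0) (hK : K ≠ ⊤) (e : ℝ)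
    (hab : a ≤ K * b) (hba : b ≤ K * a) : a ^ e ≤ K ^ |e| * b ^ e := by
  rcases le_total 0 e with he | he
  · rw [abs_of_nonneg he, ← ENNReal.mul_rpow_of_nonneg _ _ he]
    exact ENNReal.rpow_le_rpow hab he
  · have hneg : 0 ≤ -e := neg_nonneg.2 he
    calc a ^ e = a⁻¹ ^ (-e) := by rw [ENNReal.inv_rpow, ENNReal.rpow_neg, inv_inv]
      _ ≤ (K * b⁻¹) ^ (-e) := by
        gcongr
        exact inv_le_mul_inv hK₀ hK hba
      _ = K ^ |e| * b ^ e := by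
        rw [ENNReal.mul_rpow_of_nonneg _ _ hneg, ENNReal.inv_rpow, ENNReal.rpow_neg b, inv_inv,
          abs_of_nonpos he]

theorem ofReal_rpow_add {a : ℝ} (ha : 0 < a) (e f : ℝ) :
    ENNReal.ofReal a ^ (e + f) = ENNReal.ofReal a ^ e * ENNReal.ofReal a ^ f :=
  ENNReal.rpow_add _ _ (ENNReal.ofReal_pos.2 ha).ne' ENNReal.ofReal_ne_top

theorem ofReal_mul_rpow {a b : ℝ} (ha : 0 ≤ a) (e : ℝ) :
    ENNReal.ofReal (a * b) ^ e = ENNReal.ofReal a ^ e * ENNReal.ofReal b ^ e := by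
  rw [ENNReal.ofReal_mul ha,
    ENNReal.mul_rpow_of_ne_top ENNReal.ofReal_ne_top ENNReal.ofReal_ne_top]

theorem ofReal_rpow_ne_top {a : ℝ} (ha : 0 < a) (e : ℝ) : ENNReal.ofReal a ^ e ≠ ⊤ := by
  rw [ENNReal.ofReal_rpow_of_pos ha]
  exact ENNReal.ofReal_ne_top

theorem ofReal_div_le_of_le_mul {ρ L : ℝ} {D : ℝ≥0∞} (hL : 0 < L)
    (h : ENNReal.ofReal ρ ≤ ENNReal.ofReal L * D) : ENNReal.ofReal (ρ / L) ≤ D := by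
  rw [ENNReal.ofReal_div_of_pos hL]
  exact ENNReal.div_le_of_le_mul' h

theorem exists_pos_le_ofReal {M : ℝ≥0∞} (hM : M ≠ ⊤) : ∃ C : ℝ, 0 < C ∧ M ≤ ENNReal.ofReal C :=
  ⟨M.toReal + 1, by positivity,
    (ENNReal.ofReal_toReal hM).ge.trans (ENNReal.ofReal_le_ofReal (by linarith))⟩

section VariableBalls

variable {X : Type*} [PseudoMetricSpace X] [MeasurableSpace X] [OpensMeasurableSpace X] {ρ : X → ℝ}

theorem setLIntegral_ball_eq_lintegral_indicator (μ : Measure X) (f : X → X → ℝ≥0∞) (y : X) :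
    ∫⁻ w in ball y (ρ y), f y w ∂μ =
      ∫⁻ w, {q : X × X | dist q.2 q.1 < ρ q.1}.indicator (Function.uncurry f) (y, w) ∂μ := by
  rw [← lintegral_indicator measurableSet_ball]
  rfl

variable [SecondCountableTopology X]

theorem measurableSet_dist_lt (hρ : Measurable ρ) :
    MeasurableSet {q : X × X | dist q.2 q.1 < ρ q.1} :=
  measurableSet_lt (measurable_snd.dist measurable_fst) (hρ.comp measurable_fst)

theorem measurableSet_dist_left_lt (hρ : Measurable ρ) (w : X) :
    MeasurableSet {y | dist w y < ρ y} :=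
  measurableSet_lt (measurable_const.dist measurable_id) hρ

theorem measurable_setLIntegral_ball (μ : Measure X) [SFinite μ] (hρ : Measurable ρ)
    {g : X → ℝ≥0∞} (hg : Measurable g) :
    Measurable fun y => ∫⁻ w in ball y (ρ y), g w ∂μ := by
  simp only [setLIntegral_ball_eq_lintegral_indicator μ fun _ => g]
  exact ((hg.comp measurable_snd).indicator (measurableSet_dist_lt hρ)).lintegral_prod_right'

theorem measurable_measure_ball (μ : Measure X) [SFinite μ] (hρ : Measurable ρ) :
    Measurable fun y => μ (ball y (ρ y)) := by
  simpa only [setLIntegral_one] using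
    measurable_setLIntegral_ball μ hρ (measurable_const (a := (1 : ℝ≥0∞)))

theorem lintegral_setLIntegral_ball_swap (μ ν : Measure X) [SFinite μ] [SFinite ν]
    (hρ : Measurable ρ) {f : X → X → ℝ≥0∞} (hf : Measurable (Function.uncurry f)) :
    ∫⁻ y, ∫⁻ w in ball y (ρ y), f y w ∂ν ∂μ =
      ∫⁻ w, ∫⁻ y in {y | dist w y < ρ y}, f y w ∂μ ∂ν := by
  simp only [setLIntegral_ball_eq_lintegral_indicator ν]
  rw [lintegral_lintegral_swap
    (f := fun y w => {q : X × X | dist q.2 q.1 < ρ q.1}.indicator (Function.uncurry f) (y, w))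
    (hf.indicator (measurableSet_dist_lt hρ)).aemeasurable]
  refine lintegral_congr fun w => ?_
  rw [← lintegral_indicator (measurableSet_dist_left_lt hρ w)]
  rfl

end VariableBalls

section RadialIntegral

variable {E : Type*} [NormedAddCommGroup E] [NormedSpace ℝ E] [FiniteDimensional ℝ E]
  [MeasurableSpace E] [BorelSpace E] (μ : Measure E) [μ.IsAddHaarMeasure]

theorem setLIntegral_ball_enorm_rpow_lt_top {κ : ℝ} (hκ : 0 < κ) :
    ∫⁻ y in ball (0 : E) 1, ‖y‖ₑ ^ (κ - Module.finrank ℝ E) ∂μ < ⊤ := by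
  rcases subsingleton_or_nontrivial E with hE | hE
  · simp [Subsingleton.elim _ (0 : E), Module.finrank_zero_of_subsingleton, hκ]
  have hint : IntegrableOn (fun y : E => ‖y‖ ^ (κ - Module.finrank ℝ E)) (ball 0 1) μ := by
    refine integrableOn_ball_of_norm_le_rpow (C := 1) (α := Module.finrank ℝ E - κ)
      Module.finrank_pos (by linarith) (.of_forall fun y => ?_)
      (measurable_norm.pow_const _).aestronglyMeasurable
    rw [neg_sub, one_mul, Real.norm_of_nonneg (by positivity)]
  refine (lintegral_congr_ae ?_).trans_lt hint.2
  filter_upwards [ae_restrict_of_ae (Measure.ae_ne μ 0)] with y hy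
  rw [Real.enorm_of_nonneg (by positivity), ← ofReal_norm,
    ENNReal.ofReal_rpow_of_pos (norm_pos_iff.2 hy)]

theorem setLIntegral_ball_eq_ofReal_pow_mul (f : E → ℝ≥0∞) (w : E) {ρ : ℝ} (hρ : 0 < ρ) :
    ∫⁻ y in ball w ρ, f y ∂μ =
      ENNReal.ofReal ρ ^ Module.finrank ℝ E * ∫⁻ y in ball (0 : E) 1, f (w + ρ • y) ∂μ := by
  let h : E ≃ₜ E := (Homeomorph.smulOfNeZero ρ hρ.ne').trans (Homeomorph.addLeft w)
  have hh : ⇑h = (w + ·) ∘ (ρ • ·) := rfl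
  have hmap : μ.map h = (ENNReal.ofReal ρ ^ Module.finrank ℝ E)⁻¹ • μ := by
    rw [hh, ← Measure.map_map (measurable_const_add w) (measurable_const_smul ρ),
      Measure.map_addHaar_smul μ hρ.ne', Measure.map_smul, map_add_left_eq_self,
      abs_of_pos (by positivity), ENNReal.ofReal_inv_of_pos (by positivity),
      ENNReal.ofReal_pow hρ.le]
  have hpre : h ⁻¹' ball w ρ = ball 0 1 := by
    ext y
    simp [hh, norm_smul, abs_of_pos hρ, hρ]
  have hscale : ∫⁻ y in ball (0 : E) 1, f (w + ρ • y) ∂μ =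
      (ENNReal.ofReal ρ ^ Module.finrank ℝ E)⁻¹ * ∫⁻ y in ball w ρ, f y ∂μ := by
    rw [← smul_eq_mul, ← lintegral_smul_measure, ← Measure.restrict_smul, ← hmap,
      h.measurableEmbedding.restrict_map, h.measurableEmbedding.lintegral_map, hpre]
    rfl
  have hρ₀ : ENNReal.ofReal ρ ^ Module.finrank ℝ E ≠ 0 :=
    pow_ne_zero _ (ENNReal.ofReal_pos.2 hρ).ne'
  rw [hscale, ← mul_assoc, ENNReal.mul_inv_cancel hρ₀ (by finiteness), one_mul]

theorem setLIntegral_ball_edist_rpow (a : ℝ) (w : E) {ρ : ℝ} (hρ : 0 < ρ) :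
    ∫⁻ y in ball w ρ, edist y w ^ a ∂μ =
      ENNReal.ofReal ρ ^ (Module.finrank ℝ E + a) * ∫⁻ y in ball (0 : E) 1, ‖y‖ₑ ^ a ∂μ := by
  have hdist : ∀ y : E, edist (w + ρ • y) w ^ a = ENNReal.ofReal ρ ^ a * ‖y‖ₑ ^ a := fun y => by
    rw [edist_eq_enorm_sub, add_sub_cancel_left, enorm_smul, Real.enorm_of_nonneg hρ.le,
      ENNReal.mul_rpow_of_ne_top ENNReal.ofReal_ne_top enorm_ne_top]
  simp only [setLIntegral_ball_eq_ofReal_pow_mul μ _ w hρ, hdist]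
  rw [lintegral_const_mul _ (by fun_prop), ← mul_assoc, ofReal_rpow_add hρ, ENNReal.rpow_natCast]

end RadialIntegral

section Covering

variable {E : Type*} [NormedAddCommGroup E] [NormedSpace ℝ E] [ProperSpace E]

theorem exists_finset_ball_subset_iUnion_ball {ε : ℝ} (hε : 0 < ε) :
    ∃ t : Finset E, ∀ (x : E) {ρ : ℝ}, 0 < ρ → ball x ρ ⊆ ⋃ a ∈ t, ball (x + ρ • a) (ρ * ε) := by
  obtain ⟨t, -, htf, ht⟩ := (isCompact_closedBall (0 : E) 1).finite_cover_balls hε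
  refine ⟨htf.toFinset, fun x ρ hρ y hy => ?_⟩
  obtain ⟨a, ha, hya⟩ : ∃ a ∈ t, ρ⁻¹ • (y - x) ∈ ball a ε := by
    refine mem_iUnion₂.1 (ht ?_) |>.imp fun a h => ⟨h.1, h.2⟩
    rw [mem_closedBall_zero_iff, norm_smul, Real.norm_of_nonneg (by positivity),
      inv_mul_le_one₀ hρ]
    exact (mem_ball_iff_norm.1 hy).le
  refine mem_iUnion₂.2 ⟨a, htf.mem_toFinset.2 ha, ?_⟩
  have hscale : y - (x + ρ • a) = ρ • (ρ⁻¹ • (y - x) - a) := by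
    rw [smul_sub, smul_inv_smul₀ hρ.ne', sub_add_eq_sub_sub]
  rw [mem_ball_iff_norm, hscale, norm_smul, Real.norm_of_nonneg hρ.le]
  exact mul_lt_mul_of_pos_left (mem_ball_iff_norm.1 hya) hρ

theorem exists_measure_ball_inter_le_nat_mul [MeasurableSpace E] {L : ℝ} (hL : 0 < L) :
    ∃ N : ℕ, ∀ (μ : Measure E) (Γ : Set E) (x : E) {ρ : ℝ} (M : ℝ≥0∞), 0 < ρ →
      (∀ ξ ∈ Γ, μ (ball ξ (ρ / L) ∩ Γ) ≤ M) → μ (ball x ρ ∩ Γ) ≤ N * M := by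
  obtain ⟨t, ht⟩ := exists_finset_ball_subset_iUnion_ball (E := E) (ε := (2 * L)⁻¹) (by positivity)
  refine ⟨t.card, fun μ Γ x ρ M hρ hM => ?_⟩
  have hpiece : ∀ z : E, μ (ball z (ρ * (2 * L)⁻¹) ∩ Γ) ≤ M := fun z => by
    rcases (ball z (ρ * (2 * L)⁻¹) ∩ Γ).eq_empty_or_nonempty with h | ⟨ξ, hξ, hξΓ⟩
    · rw [h, measure_empty]
      exact zero_le
    · refine (measure_mono (inter_subset_inter_left _ (ball_subset_ball' ?_))).trans (hM ξ hξΓ)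
      rw [mem_ball'] at hξ
      calc ρ * (2 * L)⁻¹ + dist z ξ ≤ ρ * (2 * L)⁻¹ + ρ * (2 * L)⁻¹ := by gcongr
        _ = ρ / L := by field_simp; norm_num
  calc μ (ball x ρ ∩ Γ) ≤ μ (⋃ a ∈ t, ball (x + ρ • a) (ρ * (2 * L)⁻¹) ∩ Γ) := by
        simp only [← iUnion_inter]
        exact measure_mono (inter_subset_inter_left _ (ht x hρ))
    _ ≤ ∑ a ∈ t, μ (ball (x + ρ • a) (ρ * (2 * L)⁻¹) ∩ Γ) := measure_biUnion_finset_le _ _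
    _ ≤ t.card * M := by
        simpa only [nsmul_eq_mul] using Finset.sum_le_card_nsmul _ _ _ fun a _ => hpiece _

end Covering

section AhlforsRegular

variable {d A L : ℝ}

theorem exists_hm_ball_inter_le (n : ℕ) (d A : ℝ) (hL : 0 < L) :
    ∃ C : ℝ≥0∞, C ≠ ⊤ ∧ ∀ Γ : Set (Euc n), AhlforsRegular d A Γ → ∀ (x : Euc n) {ρ : ℝ}, 0 < ρ →
      ENNReal.ofReal ρ ≤ ENNReal.ofReal L * Metric.ediam Γ →
        hm n d (ball x ρ ∩ Γ) ≤ C * ENNReal.ofReal ρ ^ d := by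
  obtain ⟨N, hN⟩ := exists_measure_ball_inter_le_nat_mul (E := Euc n) hL
  refine ⟨N * ENNReal.ofReal (A * L⁻¹ ^ d), by finiteness, fun Γ ⟨_, hA, hΓ⟩ x ρ hρ hdiam => ?_⟩
  have hupper : ∀ ξ ∈ Γ, hm n d (ball ξ (ρ / L) ∩ Γ) ≤ ENNReal.ofReal (A * (ρ / L) ^ d) :=
    fun ξ hξ => (hΓ ξ hξ _ (by positivity) (ofReal_div_le_of_le_mul hL hdiam)).2
  refine (hN (hm n d) Γ x _ hρ hupper).trans_eq ?_
  rw [ENNReal.ofReal_rpow_of_pos hρ, mul_assoc, ← ENNReal.ofReal_mul (by positivity), mul_assoc,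
    ← Real.mul_rpow (by positivity) hρ.le, inv_mul_eq_div]

theorem AhlforsRegular.ofReal_rpow_le_hm_ball_inter {Γ : Set (Euc n)} (hΓ : AhlforsRegular d A Γ)
    (hL : 2 ≤ L) {y : Euc n} {ρ : ℝ} (hρ : 0 < ρ) (hy : infDist y Γ ≤ ρ)
    (hdiam : ENNReal.ofReal ρ ≤ ENNReal.ofReal L * Metric.ediam Γ) :
    ENNReal.ofReal ρ ^ d ≤ ENNReal.ofReal (A * L ^ d) * hm n d (ball y (2 * ρ) ∩ Γ) := by
  obtain ⟨hne, hA, hreg⟩ := hΓ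
  have hL₀ : 0 < L := two_pos.trans_le hL
  obtain ⟨ξ, hξ, hyξ⟩ := (infDist_lt_iff (x := y) (r := 3 / 2 * ρ) hne).1 (by linarith)
  have hsub : ball ξ (ρ / L) ⊆ ball y (2 * ρ) := by
    refine ball_subset_ball' ?_
    have hhalf : ρ / L ≤ ρ / 2 := by gcongr
    rw [dist_comm]
    linarith
  have hlower := (hreg ξ hξ (ρ / L) (by positivity) (ofReal_div_le_of_le_mul hL₀ hdiam)).1
  calc ENNReal.ofReal ρ ^ d = ENNReal.ofReal (A * L ^ d) * ENNReal.ofReal ((ρ / L) ^ d / A) := by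
        rw [← ENNReal.ofReal_mul (by positivity), ENNReal.ofReal_rpow_of_pos hρ,
          Real.div_rpow hρ.le hL₀.le]
        congr 1
        field_simp
    _ ≤ ENNReal.ofReal (A * L ^ d) * hm n d (ball y (2 * ρ) ∩ Γ) := by
        gcongr
        exact hlower.trans (measure_mono (inter_subset_inter_left _ hsub))

end AhlforsRegular

section BoundaryDistance

variable {Ω : Set (Euc n)}

theorem continuous_bd (Ω : Set (Euc n)) : Continuous (bd Ω) :=
  continuous_infDist_pt _

theorem measurable_bd (Ω : Set (Euc n)) : Measurable (bd Ω) :=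
  (continuous_bd Ω).measurable

theorem bd_le_dist {x : Euc n} (hx : x ∈ frontier Ω) (y : Euc n) : bd Ω y ≤ dist y x :=
  infDist_le_dist_of_mem hx

theorem bd_le_bd_add_dist (Ω : Set (Euc n)) (y z : Euc n) : bd Ω y ≤ bd Ω z + dist y z :=
  infDist_le_infDist_add_dist

theorem bd_pos (hΩ : IsOpen Ω) (hne : (frontier Ω).Nonempty) {y : Euc n} (hy : y ∈ Ω) :
    0 < bd Ω y :=
  (isClosed_frontier.notMem_iff_infDist_pos hne).1 fun h => (hΩ.frontier_eq ▸ h).2 hy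

theorem bd_le_of_mem_ball {x y : Euc n} {R : ℝ} (hx : x ∈ frontier Ω) (hy : y ∈ ball x R) :
    bd Ω y ≤ R :=
  (bd_le_dist hx y).trans (mem_ball.1 hy).le

theorem ball_bd_subset (hΩ : IsOpen Ω) {y : Euc n} (hy : y ∈ Ω) : ball y (bd Ω y) ⊆ Ω := by
  refine fun z hz => (convex_ball y (bd Ω y)).isPreconnected.subset_of_closure_inter_subset hΩ
    ⟨y, mem_ball_self (dist_nonneg.trans_lt hz), hy⟩ ?_ hz
  rintro w ⟨hw, hwb⟩
  by_contra hwΩ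
  have hwf : w ∈ frontier Ω := hΩ.frontier_eq ▸ ⟨hw, hwΩ⟩
  exact (bd_le_dist hwf y).not_gt (mem_ball'.1 hwb)

theorem ofReal_bd_rpow_le_of_dist_le {y z : Euc n} (hyz : dist y z ≤ bd Ω y / 2) (e : ℝ) :
    ENNReal.ofReal (bd Ω y) ^ e ≤ 2 ^ |e| * ENNReal.ofReal (bd Ω z) ^ e := by
  have hz := bd_le_bd_add_dist Ω z y
  have hy := bd_le_bd_add_dist Ω y z
  rw [dist_comm] at hz
  refine rpow_le_rpow_abs_mul_rpow two_ne_zero ENNReal.ofNat_ne_top e ?_ ?_ <;>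
    rw [← ENNReal.ofReal_ofNat 2, ← ENNReal.ofReal_mul zero_le_two] <;>
    exact ENNReal.ofReal_le_ofReal (by linarith [dist_nonneg (x := y) (y := z)])

end BoundaryDistance

section WeightIntegral

theorem setLIntegral_rpow_le_setLIntegral_ball_edist_rpow {X : Type*} [PseudoMetricSpace X]
    [MeasurableSpace X] [OpensMeasurableSpace X] [SecondCountableTopology X] (μ : Measure X)
    {D : Set X} {δ : X → ℝ} {R : ℝ} (hD : MeasurableSet D) (hδ : Measurable δ)
    (hDR : ∀ y ∈ D, δ y ≤ R) {w : X} (hw : ∀ y ∈ D, δ y ≤ dist y w) (a : ℝ) :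
    ∫⁻ y in {y | dist w y < 2 * δ y}, ENNReal.ofReal (δ y) ^ a ∂(μ.restrict D) ≤
      2 ^ |a| * ∫⁻ y in ball w (2 * R), edist y w ^ a ∂μ := by
  have hT := measurableSet_dist_left_lt (hδ.const_mul 2) w
  have hpoint : ∀ y ∈ {y | dist w y < 2 * δ y} ∩ D,
      ENNReal.ofReal (δ y) ^ a ≤ 2 ^ |a| * edist y w ^ a := by
    rintro y ⟨hyw, hy⟩
    rw [edist_dist]
    refine rpow_le_rpow_abs_mul_rpow two_ne_zero ENNReal.ofNat_ne_top a ?_ ?_ <;>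
      rw [← ENNReal.ofReal_ofNat 2, ← ENNReal.ofReal_mul zero_le_two] <;>
      refine ENNReal.ofReal_le_ofReal ?_
    · linarith [hw y hy, dist_nonneg (x := y) (y := w)]
    · exact dist_comm w y ▸ hyw.le
  rw [Measure.restrict_restrict hT, ← lintegral_const_mul' _ _ (by finiteness)]
  exact (setLIntegral_mono' (hT.inter hD) hpoint).trans <| lintegral_mono_set fun y ⟨hyw, hy⟩ =>
    mem_ball'.2 (hyw.trans_le (mul_le_mul_of_nonneg_left (hDR y hy) zero_le_two))

theorem exists_setLIntegral_rpow_mul_measure_ball_le {E : Type*} [NormedAddCommGroup E]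
    [NormedSpace ℝ E] [FiniteDimensional ℝ E] [MeasurableSpace E] [BorelSpace E] (μ : Measure E)
    [μ.IsAddHaarMeasure] {κ : ℝ} (hκ : 0 < κ) :
    ∃ C : ℝ≥0∞, C ≠ ⊤ ∧ ∀ (ν : Measure E) [SFinite ν] {D : Set E} {δ : E → ℝ} {R : ℝ},
      MeasurableSet D → Measurable δ → 0 < R → (∀ y ∈ D, δ y ≤ R) →
      (∀ᵐ w ∂ν, ∀ y ∈ D, δ y ≤ dist y w) →
        ∫⁻ y in D, ENNReal.ofReal (δ y) ^ (κ - Module.finrank ℝ E) * ν (ball y (2 * δ y)) ∂μ ≤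
          C * ENNReal.ofReal R ^ κ * ν univ := by
  set a : ℝ := κ - Module.finrank ℝ E with ha
  set I : ℝ≥0∞ := ∫⁻ y in ball (0 : E) 1, ‖y‖ₑ ^ a ∂μ with hI
  have hI' : I ≠ ⊤ := (setLIntegral_ball_enorm_rpow_lt_top μ hκ).ne
  refine ⟨2 ^ |a| * (2 ^ κ * I), by finiteness, fun ν _ D δ R hD hδ hR hDR hν => ?_⟩
  have hinner : ∀ᵐ w ∂ν, ∫⁻ y in {y | dist w y < 2 * δ y}, ENNReal.ofReal (δ y) ^ a ∂(μ.restrict D)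
      ≤ 2 ^ |a| * (2 ^ κ * I) * ENNReal.ofReal R ^ κ := by
    filter_upwards [hν] with w hw
    refine (setLIntegral_rpow_le_setLIntegral_ball_edist_rpow μ hD hδ hDR hw a).trans_eq ?_
    rw [setLIntegral_ball_edist_rpow μ a w (by positivity), ← hI, ha, add_sub_cancel,
      ofReal_mul_rpow zero_le_two, ENNReal.ofReal_ofNat]
    ring
  calc ∫⁻ y in D, ENNReal.ofReal (δ y) ^ a * ν (ball y (2 * δ y)) ∂μ
      = ∫⁻ y in D, ∫⁻ _ in ball y (2 * δ y), ENNReal.ofReal (δ y) ^ a ∂ν ∂μ := by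
        simp only [setLIntegral_const]
    _ = ∫⁻ w, ∫⁻ y in {y | dist w y < 2 * δ y}, ENNReal.ofReal (δ y) ^ a ∂(μ.restrict D) ∂ν :=
        lintegral_setLIntegral_ball_swap _ _ (hδ.const_mul 2)
          ((hδ.comp measurable_fst).ennreal_ofReal.pow_const a)
    _ ≤ ∫⁻ _, 2 ^ |a| * (2 ^ κ * I) * ENNReal.ofReal R ^ κ ∂ν := lintegral_mono_ae hinner
    _ = _ := lintegral_const _

theorem exists_setLIntegral_bd_rpow_le_mul_hm (n : ℕ) (d A : ℝ) {κ L : ℝ} (hκ : 0 < κ) :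
    ∃ C : ℝ≥0∞, C ≠ ⊤ ∧ ∀ Ω : Set (Euc n), IsOpen Ω → AhlforsRegular d A (frontier Ω) →
      ∀ x ∈ frontier Ω, ∀ R : ℝ, 0 < R →
        ENNReal.ofReal R ≤ ENNReal.ofReal L * Metric.ediam (frontier Ω) →
          hm n d (ball x (3 * R) ∩ frontier Ω) ≠ ⊤ →
            ∫⁻ y in Ω ∩ ball x R, ENNReal.ofReal (bd Ω y) ^ (d - n + κ) ≤
              C * ENNReal.ofReal R ^ κ * hm n d (ball x (3 * R) ∩ frontier Ω) := by
  obtain ⟨C, hC, hint⟩ :=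
    exists_setLIntegral_rpow_mul_measure_ball_le (volume : Measure (Euc n)) hκ
  rw [finrank_euclideanSpace_fin] at hint
  set K := ENNReal.ofReal (A * max L 2 ^ d)
  refine ⟨K * C, by finiteness, fun Ω hΩ hΓ x hx R hR hdiam hfin => ?_⟩
  set ν := (hm n d).restrict (ball x (3 * R) ∩ frontier Ω) with hν
  have hνuniv : ν univ = hm n d (ball x (3 * R) ∩ frontier Ω) := Measure.restrict_apply_univ _
  have : IsFiniteMeasure ν := ⟨hνuniv ▸ hfin.lt_top⟩
  have hD : MeasurableSet (Ω ∩ ball x R) := hΩ.measurableSet.inter measurableSet_ball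
  have hlower : ∀ y ∈ Ω ∩ ball x R, ENNReal.ofReal (bd Ω y) ^ (d - n + κ) ≤
      K * (ENNReal.ofReal (bd Ω y) ^ (κ - n) * ν (ball y (2 * bd Ω y))) := by
    rintro y ⟨hyΩ, hyR⟩
    have hδ := bd_pos hΩ hΓ.1 hyΩ
    have hδR := bd_le_of_mem_ball hx hyR
    have hball : ball y (2 * bd Ω y) ⊆ ball x (3 * R) :=
      ball_subset_ball' (by linarith [mem_ball.1 hyR])
    have hδd := hΓ.ofReal_rpow_le_hm_ball_inter (le_max_right L 2) hδ le_rfl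
      ((ENNReal.ofReal_le_ofReal hδR).trans (hdiam.trans (by gcongr; exact le_max_left L 2)))
    rw [hν, Measure.restrict_apply measurableSet_ball, ← inter_assoc, inter_eq_left.2 hball,
      show d - n + κ = d + (κ - n) by ring, ofReal_rpow_add hδ, mul_left_comm, mul_comm]
    gcongr
  calc ∫⁻ y in Ω ∩ ball x R, ENNReal.ofReal (bd Ω y) ^ (d - n + κ)
      ≤ K * ∫⁻ y in Ω ∩ ball x R,
          ENNReal.ofReal (bd Ω y) ^ (κ - n) * ν (ball y (2 * bd Ω y)) := by
        rw [← lintegral_const_mul' _ _ ENNReal.ofReal_ne_top]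
        exact setLIntegral_mono' hD hlower
    _ ≤ K * (C * ENNReal.ofReal R ^ κ * ν univ) := by
        gcongr
        refine hint ν hD (measurable_bd Ω) hR (fun y hy => bd_le_of_mem_ball hx hy.2) ?_
        filter_upwards [ae_restrict_mem (measurableSet_ball.inter isClosed_frontier.measurableSet)]
          with w hw y _ using bd_le_dist hw.2 y
    _ = _ := by rw [hνuniv]; ring

theorem exists_setLIntegral_bd_rpow_le (n : ℕ) (d A : ℝ) {κ L : ℝ} (hκ : 0 < κ) (hL : 0 < L) :
    ∃ C : ℝ≥0∞, C ≠ ⊤ ∧ ∀ Ω : Set (Euc n), IsOpen Ω → AhlforsRegular d A (frontier Ω) →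
      ∀ x ∈ frontier Ω, ∀ R : ℝ, 0 < R →
        ENNReal.ofReal R ≤ ENNReal.ofReal L * Metric.ediam (frontier Ω) →
          ∫⁻ y in Ω ∩ ball x R, ENNReal.ofReal (bd Ω y) ^ (d - n + κ) ≤
            C * ENNReal.ofReal R ^ (d + κ) := by
  obtain ⟨C₁, hC₁, hhm⟩ := exists_hm_ball_inter_le n d A (L := 3 * L) (by positivity)
  obtain ⟨C₂, hC₂, hint⟩ := exists_setLIntegral_bd_rpow_le_mul_hm n d A hκ (L := L)
  have h3 := ofReal_rpow_ne_top three_pos d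
  refine ⟨C₂ * (C₁ * ENNReal.ofReal 3 ^ d), by finiteness, fun Ω hΩ hΓ x hx R hR hdiam => ?_⟩
  have hhmR : hm n d (ball x (3 * R) ∩ frontier Ω) ≤ C₁ * ENNReal.ofReal (3 * R) ^ d := by
    refine hhm _ hΓ x (by positivity) ?_
    rw [ENNReal.ofReal_mul zero_le_three, ENNReal.ofReal_mul zero_le_three, mul_assoc]
    gcongr
  have hRd := ofReal_rpow_ne_top (a := 3 * R) (by positivity) d
  calc ∫⁻ y in Ω ∩ ball x R, ENNReal.ofReal (bd Ω y) ^ (d - n + κ)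
      ≤ C₂ * ENNReal.ofReal R ^ κ * hm n d (ball x (3 * R) ∩ frontier Ω) :=
        hint Ω hΩ hΓ x hx R hR hdiam (ne_top_of_le_ne_top (by finiteness) hhmR)
    _ ≤ C₂ * ENNReal.ofReal R ^ κ * (C₁ * ENNReal.ofReal (3 * R) ^ d) := by gcongr
    _ = _ := by rw [ofReal_rpow_add hR, ofReal_mul_rpow zero_le_three]; ring

end WeightIntegral

section BallAverages

variable {E : Type*} [NormedAddCommGroup E] [NormedSpace ℝ E] [FiniteDimensional ℝ E]
  [MeasurableSpace E] [BorelSpace E] (μ : Measure E) [μ.IsAddHaarMeasure] {ρ : E → ℝ} {m : ℝ}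

theorem le_mul_setLIntegral_inv_measure_ball_mul (hm : 0 < m) {z : E} {σ : ℝ} (hσ : 0 < σ)
    (hρ : ∀ y ∈ ball z σ, ρ y ≤ m * σ) {w : E → ℝ≥0∞} {b K : ℝ≥0∞} (hK : K ≠ ⊤)
    (hw : ∀ y ∈ ball z σ, b ≤ K * w y) :
    b ≤ ENNReal.ofReal (m ^ Module.finrank ℝ E) * K *
      ∫⁻ y in ball z σ, (μ (ball y (ρ y)))⁻¹ * w y ∂μ := by
  set M : ℝ≥0∞ := ENNReal.ofReal (m ^ Module.finrank ℝ E)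
  have hM : M ≠ 0 := (ENNReal.ofReal_pos.2 (by positivity)).ne'
  have hvol : ∀ y ∈ ball z σ, μ (ball y (ρ y)) ≤ M * μ (ball z σ) := fun y hy =>
    calc μ (ball y (ρ y)) ≤ μ (ball y (m * σ)) := measure_mono (ball_subset_ball (hρ y hy))
      _ = M * μ (ball z σ) := by
        rw [Measure.addHaar_ball_mul_of_pos μ y hm, Measure.addHaar_ball_center μ z]
  calc b = ∫⁻ _ in ball z σ, (μ (ball z σ))⁻¹ * b ∂μ := by
        rw [setLIntegral_const, mul_right_comm, ENNReal.inv_mul_cancel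
          (measure_ball_pos μ z hσ).ne' measure_ball_lt_top.ne, one_mul]
    _ ≤ ∫⁻ y in ball z σ, M * K * ((μ (ball y (ρ y)))⁻¹ * w y) ∂μ := by
        refine setLIntegral_mono' measurableSet_ball fun y hy => ?_
        rw [mul_mul_mul_comm]
        exact mul_le_mul' (inv_le_mul_inv hM ENNReal.ofReal_ne_top (hvol y hy)) (hw y hy)
    _ = _ := lintegral_const_mul' _ _ (ENNReal.mul_ne_top ENNReal.ofReal_ne_top hK)

theorem setLIntegral_mul_le_setLIntegral_laverage_ball_mul (hm : 0 < m) (hρ : Measurable ρ)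
    {σ : E → ℝ} {S Ψ : Set E} (hS : MeasurableSet S) (hσ : ∀ z ∈ S, 0 < σ z)
    (hΨ : ∀ z ∈ S, ball z (σ z) ⊆ Ψ)
    (hρσ : ∀ z ∈ S, ∀ y ∈ ball z (σ z), dist z y < ρ y ∧ ρ y ≤ m * σ z)
    {g w : E → ℝ≥0∞} (hg : Measurable g) (hw : Measurable w) {K : ℝ≥0∞} (hK : K ≠ ⊤)
    (hwK : ∀ z ∈ S, ∀ y ∈ ball z (σ z), w z ≤ K * w y) :
    ∫⁻ z in S, g z * w z ∂μ ≤ ENNReal.ofReal (m ^ Module.finrank ℝ E) * K *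
      ∫⁻ y in Ψ, (⨍⁻ z in ball y (ρ y), g z ∂μ) * w y ∂μ := by
  set M : ℝ≥0∞ := ENNReal.ofReal (m ^ Module.finrank ℝ E) * K
  have hM : M ≠ ⊤ := ENNReal.mul_ne_top ENNReal.ofReal_ne_top hK
  set u : E → ℝ≥0∞ := fun y => (μ (ball y (ρ y)))⁻¹ * w y
  have hu : Measurable u := (measurable_measure_ball μ hρ).inv.mul hw
  have hpoint : ∀ z ∈ S, g z * w z ≤
      M * ∫⁻ y in {y | dist z y < ρ y}, u y * g z ∂(μ.restrict Ψ) := fun z hz =>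
    calc g z * w z ≤ g z * (M * ∫⁻ y in ball z (σ z), u y ∂μ) := by
          gcongr
          exact le_mul_setLIntegral_inv_measure_ball_mul μ hm (hσ z hz)
            (fun y hy => (hρσ z hz y hy).2) hK (hwK z hz)
      _ = M * ∫⁻ y in ball z (σ z), u y * g z ∂μ := by rw [lintegral_mul_const _ hu]; ring
      _ ≤ _ := by
          gcongr 1
          rw [Measure.restrict_restrict (measurableSet_dist_left_lt hρ z)]
          exact lintegral_mono_set fun y hy => ⟨(hρσ z hz y hy).1, hΨ z hz hy⟩
  calc ∫⁻ z in S, g z * w z ∂μ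
      ≤ ∫⁻ z in S, M * ∫⁻ y in {y | dist z y < ρ y}, u y * g z ∂(μ.restrict Ψ) ∂μ :=
        setLIntegral_mono' hS hpoint
    _ ≤ ∫⁻ z, M * ∫⁻ y in {y | dist z y < ρ y}, u y * g z ∂(μ.restrict Ψ) ∂μ :=
        setLIntegral_le_lintegral _ _
    _ = M * ∫⁻ y in Ψ, ∫⁻ z in ball y (ρ y), u y * g z ∂μ ∂μ := by
        rw [lintegral_const_mul' _ _ hM, lintegral_setLIntegral_ball_swap _ _ hρ
          (f := fun y z => u y * g z) ((hu.comp measurable_fst).mul (hg.comp measurable_snd))]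
    _ = _ := by
        congr 1
        refine lintegral_congr fun y => ?_
        rw [lintegral_const_mul _ hg, setLAverage_eq, ENNReal.div_eq_inv_mul]
        ring

end BallAverages

section WhitneyBalls

variable {Ω : Set (Euc n)} {c : ℝ} {y z : Euc n}

theorem dist_le_bd_div_two_of_mem_ball (hc : 0 < c) (hc1 : c < 1)
    (hy : y ∈ ball z (c / (1 + c) * bd Ω z)) : dist z y ≤ bd Ω z / 2 := by
  have hhalf : c / (1 + c) ≤ 1 / 2 := by
    rw [div_le_div_iff₀ (by linarith) two_pos]
    linarith
  calc dist z y ≤ c / (1 + c) * bd Ω z := (mem_ball'.1 hy).le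
    _ ≤ 1 / 2 * bd Ω z := by
      gcongr
      exact infDist_nonneg
    _ = bd Ω z / 2 := by ring

theorem dist_lt_mul_bd_of_mem_ball (hc : 0 < c) (hy : y ∈ ball z (c / (1 + c) * bd Ω z)) :
    dist z y < c * bd Ω y := by
  have hzy := bd_le_bd_add_dist Ω z y
  rw [mem_ball', div_mul_eq_mul_div, lt_div_iff₀ (by linarith)] at hy
  nlinarith

theorem mul_bd_le_of_mem_ball (hc : 0 < c) (hc1 : c < 1)
    (hy : y ∈ ball z (c / (1 + c) * bd Ω z)) : c * bd Ω y ≤ 3 * (c / (1 + c) * bd Ω z) := by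
  have hdist := dist_le_bd_div_two_of_mem_ball hc hc1 hy
  have hyz := bd_le_bd_add_dist Ω y z
  rw [dist_comm] at hyz
  have hδ : 0 ≤ bd Ω z := infDist_nonneg
  calc c * bd Ω y ≤ c * (3 / 2 * bd Ω z) := by gcongr; linarith
    _ = 3 * (c / 2 * bd Ω z) := by ring
    _ ≤ 3 * (c / (1 + c) * bd Ω z) := by gcongr; linarith

theorem ball_mul_bd_subset (hΩ : IsOpen Ω) (hc1 : c ≤ 1) (hy : y ∈ Ω) :
    ball y (c * bd Ω y) ⊆ Ω :=
  (ball_subset_ball (mul_le_of_le_one_left infDist_nonneg hc1)).trans (ball_bd_subset hΩ hy)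

theorem ball_subset_annulus (hΩ : IsOpen Ω) {x : Euc n} (hx : x ∈ frontier Ω)
    (hc : 0 < c) (hc1 : c < 1) {ϱ r : ℝ} (hz : z ∈ (Ω ∩ ball x r) \ ball x ϱ) :
    ball z (c / (1 + c) * bd Ω z) ⊆ (Ω ∩ ball x (r / (1 - c))) \ ball x (ϱ / (1 + c)) := by
  obtain ⟨⟨hzΩ, hzr⟩, hzϱ⟩ := hz
  rw [mem_ball] at hzr hzϱ
  intro y hy
  have hyz : (1 + c) * dist y z < c * dist z x := by
    rw [mem_ball, div_mul_eq_mul_div, lt_div_iff₀' (by linarith)] at hy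
    exact hy.trans_le (mul_le_mul_of_nonneg_left (bd_le_dist hx z) hc.le)
  have hyΩ : y ∈ Ω := ball_mul_bd_subset hΩ (div_le_one_of_le₀ (by linarith) (by linarith)) hzΩ hy
  refine ⟨⟨hyΩ, ?_⟩, ?_⟩
  · rw [mem_ball, lt_div_iff₀ (by linarith)]
    nlinarith [dist_triangle y z x, dist_nonneg (x := y) (y := z)]
  · rw [mem_ball, not_lt, div_le_iff₀ (by linarith)]
    nlinarith [dist_triangle_left z x y]

end WhitneyBalls

section WhitneyAverages

variable {Ω S Ψ : Set (Euc n)} {c : ℝ} {β : ℝ≥0∞} {V : Type*} [NormedAddCommGroup V]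

theorem wAvg_rpow_toReal (hβ₀ : β ≠ 0) (hβ : β ≠ ⊤) (f : Euc n → V) (y : Euc n) :
    wAvg Ω c β f y ^ β.toReal = ⨍⁻ z in ball y (c * bd Ω y), ‖f z‖ₑ ^ β.toReal ∂volume := by
  rw [wAvg, eLpNorm_eq_lintegral_rpow_enorm_toReal hβ₀ hβ, ← ENNReal.rpow_mul,
    one_div_mul_cancel (ENNReal.toReal_pos hβ₀ hβ).ne', ENNReal.rpow_one, setLAverage_eq']

theorem measurable_wAvg (hβ₀ : β ≠ 0) (hβ : β ≠ ⊤) {f : Euc n → V} (hf : StronglyMeasurable f) :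
    Measurable (wAvg Ω c β f) := by
  have hρ : Measurable fun y => c * bd Ω y := (measurable_bd Ω).const_mul c
  have hroot : wAvg Ω c β f = fun y =>
      (⨍⁻ z in ball y (c * bd Ω y), ‖f z‖ₑ ^ β.toReal ∂volume) ^ β.toReal⁻¹ := by
    funext y
    rw [← wAvg_rpow_toReal hβ₀ hβ, ENNReal.rpow_rpow_inv (ENNReal.toReal_pos hβ₀ hβ).ne']
  simp only [hroot, setLAverage_eq]
  exact ((measurable_setLIntegral_ball _ hρ (hf.enorm.pow_const _)).div
    (measurable_measure_ball _ hρ)).pow_const _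

theorem wAvg_congr_ae (hΩ : IsOpen Ω) (hc1 : c ≤ 1) {f g : Euc n → V}
    (hfg : f =ᵐ[volume.restrict Ω] g) {y : Euc n} (hy : y ∈ Ω) :
    wAvg Ω c β f y = wAvg Ω c β g y :=
  eLpNorm_congr_ae <| Measure.ae_smul_measure
    (ae_restrict_of_ae_restrict_of_subset (ball_mul_bd_subset hΩ hc1 hy) hfg) _

theorem avNormOn_congr_ae (hΩ : IsOpen Ω) (hc1 : c ≤ 1) (hΨ : MeasurableSet Ψ) (hΨΩ : Ψ ⊆ Ω)
    {f g : Euc n → V} (hfg : f =ᵐ[volume.restrict Ω] g) (d : ℝ) (p : ℝ≥0∞) (s : ℝ) :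
    avNormOn Ω Ψ d c β p s f = avNormOn Ω Ψ d c β p s g := by
  have hW : ∀ y ∈ Ψ, wAvg Ω c β f y = wAvg Ω c β g y := fun y hy =>
    wAvg_congr_ae hΩ hc1 hfg (hΨΩ hy)
  unfold avNormOn
  congr 1
  · exact iSup_congr fun y => iSup_congr fun hy => by rw [hW y hy]
  · congr 1
    exact setLIntegral_congr_fun hΨ fun y hy => by simp only [hW y hy]

theorem wLb_congr_ae (hSΩ : S ⊆ Ω) {F G : Euc n → ℝ} (hFG : F =ᵐ[volume.restrict Ω] G)
    (d : ℝ) (β : ℝ≥0∞) (ς : ℝ) : wLb Ω S d β ς F = wLb Ω S d β ς G := by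
  have hS := ae_restrict_of_ae_restrict_of_subset hSΩ hFG
  unfold wLb
  congr 1
  · exact essSup_congr_ae (hS.mono fun y hy => by simp only [hy])
  · congr 1
    exact lintegral_congr_ae (hS.mono fun y hy => by simp only [hy])

theorem enorm_ae_le_wAvg_top (f : Euc n → V) (y : Euc n) :
    ∀ᵐ z ∂volume.restrict (ball y (c * bd Ω y)), ‖f z‖ₑ ≤ wAvg Ω c ⊤ f y := by
  have hvol : (volume (ball y (c * bd Ω y)))⁻¹ ≠ 0 :=
    ENNReal.inv_ne_zero.2 measure_ball_lt_top.ne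
  rw [← Measure.ae_ennreal_smul_measure_eq hvol, wAvg, eLpNorm_exponent_top]
  exact enorm_ae_le_eLpNormEssSup _ _

theorem wLb_top_le_avNormOn_top (hΩ : IsOpen Ω) (hne : (frontier Ω).Nonempty) (hc : 0 < c)
    (hc1 : c < 1) (hS : MeasurableSet S) (hSΩ : S ⊆ Ω)
    (hSΨ : ∀ z ∈ S, ball z (c / (1 + c) * bd Ω z) ⊆ Ψ) (d ς : ℝ) (F : Euc n → ℝ) :
    wLb Ω S d ⊤ ς F ≤ 2 ^ |1 - ς| * avNormOn Ω Ψ d c ⊤ ⊤ ς F := by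
  -- Centres in a countable dense set suffice, so the exceptional null sets can be collected.
  obtain ⟨D, hDc, hDd⟩ := TopologicalSpace.exists_countable_dense (Euc n)
  have hD : ∀ᵐ z, ∀ y ∈ D, z ∈ ball y (c * bd Ω y) → ‖F z‖ₑ ≤ wAvg Ω c ⊤ F y :=
    (ae_ball_iff hDc).2 fun y _ =>
      (ae_restrict_iff' measurableSet_ball).1 (enorm_ae_le_wAvg_top F y)
  rw [wLb, if_pos rfl, avNormOn, if_pos rfl]
  refine essSup_le_of_ae_le _ ((ae_restrict_iff' hS).2 ?_)
  filter_upwards [hD] with z hz hzS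
  have hδ := bd_pos hΩ hne (hSΩ hzS)
  obtain ⟨y, hy, hyD⟩ := hDd.inter_open_nonempty (ball z (c / (1 + c) * bd Ω z)) isOpen_ball
    (nonempty_ball.2 (by positivity))
  calc ‖F z‖ₑ * ENNReal.ofReal (bd Ω z) ^ (1 - ς)
      ≤ wAvg Ω c ⊤ F y * (2 ^ |1 - ς| * ENNReal.ofReal (bd Ω y) ^ (1 - ς)) :=
        mul_le_mul' (hz y hyD (dist_lt_mul_bd_of_mem_ball hc hy))
          (ofReal_bd_rpow_le_of_dist_le (dist_le_bd_div_two_of_mem_ball hc hc1 hy) _)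
    _ = 2 ^ |1 - ς| * (wAvg Ω c ⊤ F y * ENNReal.ofReal (bd Ω y) ^ (1 - ς)) := mul_left_comm ..
    _ ≤ _ := by
        gcongr
        exact le_iSup₂ (f := fun y (_ : y ∈ Ψ) =>
          wAvg Ω c ⊤ F y * ENNReal.ofReal (bd Ω y) ^ (1 - ς)) y (hSΨ z hzS hy)

theorem wLb_le_avNormOn (hΩ : IsOpen Ω) (hne : (frontier Ω).Nonempty) (hc : 0 < c) (hc1 : c < 1)
    (hβ₀ : β ≠ 0) (hβ : β ≠ ⊤) (hS : MeasurableSet S) (hSΩ : S ⊆ Ω)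
    (hSΨ : ∀ z ∈ S, ball z (c / (1 + c) * bd Ω z) ⊆ Ψ) (d ς : ℝ) {F : Euc n → ℝ}
    (hF : Measurable F) :
    wLb Ω S d β ς F ≤
      (ENNReal.ofReal (3 ^ n) * 2 ^ |d - n + β.toReal - β.toReal * ς|) ^ (1 / β.toReal) *
        avNormOn Ω Ψ d c β β ς F := by
  have havg := setLIntegral_mul_le_setLIntegral_laverage_ball_mul volume three_pos
    ((measurable_bd Ω).const_mul c) hS
    (fun z hz => mul_pos (by positivity) (bd_pos hΩ hne (hSΩ hz))) hSΨ
    (fun z _ y hy => ⟨dist_lt_mul_bd_of_mem_ball hc hy, mul_bd_le_of_mem_ball hc hc1 hy⟩)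
    (hF.enorm.pow_const β.toReal)
    ((measurable_bd Ω).ennreal_ofReal.pow_const (d - n + β.toReal - β.toReal * ς))
    (by finiteness : (2 : ℝ≥0∞) ^ |d - n + β.toReal - β.toReal * ς| ≠ ⊤)
    (fun z _ y hy => ofReal_bd_rpow_le_of_dist_le (dist_le_bd_div_two_of_mem_ball hc hc1 hy) _)
  rw [finrank_euclideanSpace_fin] at havg
  simp only [← wAvg_rpow_toReal hβ₀ hβ] at havg
  rw [wLb, if_neg hβ, avNormOn, if_neg hβ, ← ENNReal.mul_rpow_of_nonneg _ _ (by positivity)]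
  exact ENNReal.rpow_le_rpow havg (by positivity)

theorem exists_wLb_le_avNormOn (n : ℕ) (d ς : ℝ) (hc : 0 < c) (hc1 : c < 1) (hβ₀ : β ≠ 0) :
    ∃ K : ℝ≥0∞, K ≠ ⊤ ∧ ∀ Ω : Set (Euc n), IsOpen Ω → (frontier Ω).Nonempty →
      ∀ S Ψ : Set (Euc n), MeasurableSet S → S ⊆ Ω → MeasurableSet Ψ → Ψ ⊆ Ω →
        (∀ z ∈ S, ball z (c / (1 + c) * bd Ω z) ⊆ Ψ) →
          ∀ F : Euc n → ℝ, AEStronglyMeasurable F (volume.restrict Ω) →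
            wLb Ω S d β ς F ≤ K * avNormOn Ω Ψ d c β β ς F := by
  rcases eq_or_ne β ⊤ with rfl | hβ
  · exact ⟨2 ^ |1 - ς|, by finiteness, fun Ω hΩ hne S Ψ hS hSΩ _ _ hSΨ F _ =>
      wLb_top_le_avNormOn_top hΩ hne hc hc1 hS hSΩ hSΨ d ς F⟩
  · refine ⟨(ENNReal.ofReal (3 ^ n) * 2 ^ |d - n + β.toReal - β.toReal * ς|) ^ (1 / β.toReal),
      by finiteness, fun Ω hΩ hne S Ψ hS hSΩ hΨ hΨΩ hSΨ F hF => ?_⟩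
    rw [wLb_congr_ae hSΩ hF.ae_eq_mk, avNormOn_congr_ae hΩ hc1.le hΨ hΨΩ hF.ae_eq_mk]
    exact wLb_le_avNormOn hΩ hne hc hc1 hβ₀ hβ hS hSΩ hSΨ d ς hF.measurable_mk

end WhitneyAverages

section Holder

variable {α : Type*} [MeasurableSpace α] {μ : Measure α} {f g : α → ℝ≥0∞}

-- Hölder's inequality for `eLpNorm` in Mathlib asks for normed values, which excludes `ℝ≥0∞`.
theorem eLpNorm_mul_le_mul_eLpNorm_top (f : α → ℝ≥0∞) (p : ℝ≥0∞) (hf : AEMeasurable f μ) :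
    eLpNorm (fun x => f x * g x) p μ ≤ eLpNorm f p μ * eLpNorm g ⊤ μ := by
  rw [mul_comm, eLpNorm_exponent_top]
  refine eLpNorm_le_mul_eLpNorm_of_ae_le_mul'' p hf.aestronglyMeasurable ?_
  filter_upwards [enorm_ae_le_eLpNormEssSup g μ] with x hx
  rw [enorm_eq_self, enorm_eq_self, mul_comm]
  exact mul_le_mul_left hx (f x)

theorem eLpNorm_mul_le_mul_eLpNorm (p q r : ℝ≥0∞) [hpqr : ENNReal.HolderTriple p q r]
    (hf : AEMeasurable f μ) (hg : AEMeasurable g μ) :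
    eLpNorm (fun x => f x * g x) r μ ≤ eLpNorm f p μ * eLpNorm g q μ := by
  have hinv := hpqr.inv_add_inv_eq_inv
  rcases eq_or_ne q ⊤ with rfl | hq
  · obtain rfl : p = r := by simpa using hinv
    exact eLpNorm_mul_le_mul_eLpNorm_top f p hf
  rcases eq_or_ne p ⊤ with rfl | hp
  · obtain rfl : q = r := by simpa using hinv
    simpa only [mul_comm] using eLpNorm_mul_le_mul_eLpNorm_top (g := f) g q hg
  rcases eq_or_ne r 0 with rfl | hr₀
  · simp
  have hp₀ : p ≠ 0 := fun h => hr₀ (by simpa [h] using hinv.symm)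
  have hq₀ : q ≠ 0 := fun h => hr₀ (by simpa [h] using hinv.symm)
  have hr : r ≠ ⊤ := fun h => hp (by simp_all)
  have hreal : 1 / r.toReal = 1 / p.toReal + 1 / q.toReal := by
    simp only [one_div, ← ENNReal.toReal_inv, ← hinv]
    exact ENNReal.toReal_add (by simpa) (by simpa)
  have hp_pos := ENNReal.toReal_pos hp₀ hp
  have hq_pos := ENNReal.toReal_pos hq₀ hq
  have hr_pos := ENNReal.toReal_pos hr₀ hr
  have hrp : r.toReal < p.toReal := by
    refine lt_of_one_div_lt_one_div hp_pos ?_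
    rw [hreal]
    exact lt_add_of_pos_right _ (one_div_pos.2 hq_pos)
  rw [eLpNorm_eq_lintegral_rpow_enorm_toReal hr₀ hr, eLpNorm_eq_lintegral_rpow_enorm_toReal hp₀ hp,
    eLpNorm_eq_lintegral_rpow_enorm_toReal hq₀ hq]
  exact ENNReal.lintegral_Lp_mul_le_Lq_mul_Lr hr_pos hrp hreal μ hf hg

theorem exists_holderTriple_of_lt {p r : ℝ≥0∞} (hr₀ : r ≠ 0) (hrp : r < p) :
    ∃ q : ℝ≥0∞, q ≠ 0 ∧ q ≠ ⊤ ∧ q.toReal⁻¹ = r.toReal⁻¹ - p.toReal⁻¹ ∧ p.HolderTriple q r := by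
  have hinv : p⁻¹ < r⁻¹ := ENNReal.inv_lt_inv.2 hrp
  refine ⟨(r⁻¹ - p⁻¹)⁻¹, by simp [hr₀], ENNReal.inv_ne_top.2 (tsub_pos_of_lt hinv).ne', ?_, ⟨?_⟩⟩
  · rw [ENNReal.toReal_inv, inv_inv, ENNReal.toReal_sub_of_le hinv.le (by simpa),
      ENNReal.toReal_inv, ENNReal.toReal_inv]
  · rw [inv_inv, add_tsub_cancel_of_le hinv.le]

end Holder

section WeightedNorms

variable {Ω Ψ : Set (Euc n)}

/-- The measure `δ^{d-n} dy`, with respect to which the weighted norms of a function are the plain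
`L^p` norms of its product with a power of `δ`. -/
def bdMeasure (Ω : Set (Euc n)) (d : ℝ) : Measure (Euc n) :=
  volume.withDensity fun y => ENNReal.ofReal (bd Ω y) ^ (d - n)

theorem eLpNorm_mul_bd_rpow_bdMeasure (hΩ : IsOpen Ω) (hne : (frontier Ω).Nonempty)
    (hΨ : MeasurableSet Ψ) (hΨΩ : Ψ ⊆ Ω) (d t : ℝ) {p : ℝ≥0∞} (hp₀ : p ≠ 0) (hp : p ≠ ⊤)
    (W : Euc n → ℝ≥0∞) :
    eLpNorm (fun y => W y * ENNReal.ofReal (bd Ω y) ^ t) p ((bdMeasure Ω d).restrict Ψ) =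
      (∫⁻ y in Ψ, W y ^ p.toReal * ENNReal.ofReal (bd Ω y) ^ (d - n + p.toReal * t)) ^
        (1 / p.toReal) := by
  have hδ : ∀ y ∈ Ψ, 0 < bd Ω y := fun y hy => bd_pos hΩ hne (hΨΩ hy)
  rw [eLpNorm_eq_lintegral_rpow_enorm_toReal hp₀ hp, bdMeasure,
    setLIntegral_withDensity_eq_setLIntegral_mul_non_measurable _
      ((measurable_bd Ω).ennreal_ofReal.pow_const _) _ hΨ
      ((ae_restrict_mem hΨ).mono fun y hy => (ofReal_rpow_ne_top (hδ y hy) _).lt_top)]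
  congr 1
  refine setLIntegral_congr_fun hΨ fun y hy => ?_
  simp only [Pi.mul_apply, enorm_eq_self]
  rw [ENNReal.mul_rpow_of_nonneg _ _ ENNReal.toReal_nonneg, ← ENNReal.rpow_mul, mul_comm t,
    ofReal_rpow_add (hδ y hy), mul_left_comm]

theorem eLpNorm_wAvg_mul_bd_rpow_eq_avNormOn (hΩ : IsOpen Ω) (hne : (frontier Ω).Nonempty)
    (hΨ : MeasurableSet Ψ) (hΨΩ : Ψ ⊆ Ω) (d c s : ℝ) (β : ℝ≥0∞) {p : ℝ≥0∞} (hp₀ : p ≠ 0)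
    (hp : p ≠ ⊤) {V : Type*} [NormedAddCommGroup V] (f : Euc n → V) :
    eLpNorm (fun y => wAvg Ω c β f y * ENNReal.ofReal (bd Ω y) ^ (1 - s)) p
      ((bdMeasure Ω d).restrict Ψ) = avNormOn Ω Ψ d c β p s f := by
  rw [eLpNorm_mul_bd_rpow_bdMeasure hΩ hne hΨ hΨΩ d _ hp₀ hp, avNormOn, if_neg hp]
  simp only [mul_sub, mul_one, ← add_sub_assoc]

theorem eLpNorm_wAvg_mul_bd_rpow_le_avNormOn (hΩ : IsOpen Ω) (hne : (frontier Ω).Nonempty)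
    (hΨ : MeasurableSet Ψ) (hΨΩ : Ψ ⊆ Ω) (d c s : ℝ) (β : ℝ≥0∞) {p : ℝ≥0∞} (hp₀ : p ≠ 0)
    {V : Type*} [NormedAddCommGroup V] (f : Euc n → V) :
    eLpNorm (fun y => wAvg Ω c β f y * ENNReal.ofReal (bd Ω y) ^ (1 - s)) p
      ((bdMeasure Ω d).restrict Ψ) ≤ avNormOn Ω Ψ d c β p s f := by
  rcases eq_or_ne p ⊤ with rfl | hp
  · rw [eLpNorm_exponent_top, avNormOn, if_pos rfl]
    refine essSup_le_of_ae_le _ ((ae_restrict_mem hΨ).mono fun y hy => ?_)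
    exact le_iSup₂ (f := fun y (_ : y ∈ Ψ) =>
      wAvg Ω c β f y * ENNReal.ofReal (bd Ω y) ^ (1 - s)) y hy
  · exact (eLpNorm_wAvg_mul_bd_rpow_eq_avNormOn hΩ hne hΨ hΨΩ d c s β hp₀ hp f).le

theorem avNormOn_le_rpow_mul_avNormOn {R : ℝ} (hR : 0 < R) (hΨ : MeasurableSet Ψ)
    (hδ : ∀ y ∈ Ψ, bd Ω y ∈ Ioc 0 R) {ς s : ℝ} (hςs : ς ≤ s) (d c : ℝ) (β : ℝ≥0∞)
    {p : ℝ≥0∞} (hp₀ : p ≠ 0) {V : Type*} [NormedAddCommGroup V] (f : Euc n → V) :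
    avNormOn Ω Ψ d c β p ς f ≤ ENNReal.ofReal R ^ (s - ς) * avNormOn Ω Ψ d c β p s f := by
  have hweight : ∀ y ∈ Ψ, ∀ a b t : ℝ, 0 ≤ t → a = t * (s - ς) + b →
      ENNReal.ofReal (bd Ω y) ^ a ≤
        (ENNReal.ofReal R ^ (s - ς)) ^ t * ENNReal.ofReal (bd Ω y) ^ b := by
    rintro y hy a b t ht rfl
    rw [ofReal_rpow_add (hδ y hy).1, ← ENNReal.rpow_mul, mul_comm t]
    gcongr ?_ * _
    exact ENNReal.rpow_le_rpow (ENNReal.ofReal_le_ofReal (hδ y hy).2)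
      (mul_nonneg (sub_nonneg.2 hςs) ht)
  rcases eq_or_ne p ⊤ with rfl | hp
  · simp only [avNormOn, if_pos, ENNReal.mul_iSup]
    refine iSup₂_mono fun y hy => ?_
    rw [mul_left_comm]
    gcongr
    simpa only [ENNReal.rpow_one] using hweight y hy (1 - ς) (1 - s) 1 zero_le_one (by ring)
  · have hp_pos := ENNReal.toReal_pos hp₀ hp
    simp only [avNormOn, if_neg hp]
    calc (∫⁻ y in Ψ, wAvg Ω c β f y ^ p.toReal *
          ENNReal.ofReal (bd Ω y) ^ (d - n + p.toReal - p.toReal * ς)) ^ (1 / p.toReal)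
        ≤ (∫⁻ y in Ψ, (ENNReal.ofReal R ^ (s - ς)) ^ p.toReal * (wAvg Ω c β f y ^ p.toReal *
          ENNReal.ofReal (bd Ω y) ^ (d - n + p.toReal - p.toReal * s))) ^ (1 / p.toReal) := by
          gcongr ?_ ^ _
          refine setLIntegral_mono' hΨ fun y hy => ?_
          rw [mul_left_comm]
          gcongr
          exact hweight y hy _ _ _ hp_pos.le (by ring)
      _ = _ := by
          rw [lintegral_const_mul' _ _ (ENNReal.rpow_ne_top_of_nonneg hp_pos.le
              (ofReal_rpow_ne_top hR _)), ENNReal.mul_rpow_of_nonneg _ _ (by positivity), one_div,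
            ENNReal.rpow_rpow_inv hp_pos.ne']

theorem aemeasurable_wAvg (hΩ : IsOpen Ω) {c : ℝ} (hc1 : c ≤ 1) (hΨ : MeasurableSet Ψ)
    (hΨΩ : Ψ ⊆ Ω) {β : ℝ≥0∞} (hβ₀ : β ≠ 0) (hβ : β ≠ ⊤) {V : Type*} [NormedAddCommGroup V]
    {f : Euc n → V} (hf : AEStronglyMeasurable f (volume.restrict Ω)) (μ : Measure (Euc n)) :
    AEMeasurable (wAvg Ω c β f) (μ.restrict Ψ) :=
  ⟨wAvg Ω c β (hf.mk f), measurable_wAvg hβ₀ hβ hf.stronglyMeasurable_mk,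
    (ae_restrict_mem hΨ).mono fun _ hy => wAvg_congr_ae hΩ hc1 hf.ae_eq_mk (hΨΩ hy)⟩

theorem avNormOn_le_avNormOn_mul_eLpNorm_bd_rpow (hΩ : IsOpen Ω) (hne : (frontier Ω).Nonempty)
    {c : ℝ} (hc1 : c ≤ 1) (hΨ : MeasurableSet Ψ) (hΨΩ : Ψ ⊆ Ω) (d ς s : ℝ) {β p q : ℝ≥0∞}
    [ENNReal.HolderTriple p q β] (hβ₀ : β ≠ 0) (hβ : β ≠ ⊤) (hp₀ : p ≠ 0)
    {V : Type*} [NormedAddCommGroup V] {f : Euc n → V}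
    (hf : AEStronglyMeasurable f (volume.restrict Ω)) :
    avNormOn Ω Ψ d c β β ς f ≤ avNormOn Ω Ψ d c β p s f *
      eLpNorm (fun y => ENNReal.ofReal (bd Ω y) ^ (s - ς)) q ((bdMeasure Ω d).restrict Ψ) := by
  have hδ (t : ℝ) : AEMeasurable (fun y => ENNReal.ofReal (bd Ω y) ^ t)
      ((bdMeasure Ω d).restrict Ψ) := ((measurable_bd Ω).ennreal_ofReal.pow_const t).aemeasurable
  have hW := aemeasurable_wAvg hΩ hc1 hΨ hΨΩ hβ₀ hβ hf (bdMeasure Ω d)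
  have hsplit : ∀ᵐ y ∂(bdMeasure Ω d).restrict Ψ,
      wAvg Ω c β f y * ENNReal.ofReal (bd Ω y) ^ (1 - ς) =
        wAvg Ω c β f y * ENNReal.ofReal (bd Ω y) ^ (1 - s) * ENNReal.ofReal (bd Ω y) ^ (s - ς) := by
    refine (ae_restrict_mem hΨ).mono fun y hy => ?_
    rw [mul_assoc, ← ofReal_rpow_add (bd_pos hΩ hne (hΨΩ hy)), sub_add_sub_cancel]
  rw [← eLpNorm_wAvg_mul_bd_rpow_eq_avNormOn hΩ hne hΨ hΨΩ d c ς β hβ₀ hβ, eLpNorm_congr_ae hsplit]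
  refine (eLpNorm_mul_le_mul_eLpNorm p q β (hW.mul (hδ _)) (hδ _)).trans ?_
  gcongr
  exact eLpNorm_wAvg_mul_bd_rpow_le_avNormOn hΩ hne hΨ hΨΩ d c s β hp₀ f

theorem exists_eLpNorm_bd_rpow_le (n : ℕ) (d A : ℝ) {t L : ℝ} (ht : 0 < t) (hL : 0 < L)
    {q : ℝ≥0∞} (hq₀ : q ≠ 0) (hq : q ≠ ⊤) :
    ∃ C : ℝ≥0∞, C ≠ ⊤ ∧ ∀ Ω : Set (Euc n), IsOpen Ω → AhlforsRegular d A (frontier Ω) →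
      ∀ x ∈ frontier Ω, ∀ R : ℝ, 0 < R →
        ENNReal.ofReal R ≤ ENNReal.ofReal L * Metric.ediam (frontier Ω) →
          ∀ Ψ : Set (Euc n), MeasurableSet Ψ → Ψ ⊆ Ω ∩ ball x R →
            eLpNorm (fun y => ENNReal.ofReal (bd Ω y) ^ t) q ((bdMeasure Ω d).restrict Ψ) ≤
              C * ENNReal.ofReal R ^ (d / q.toReal + t) := by
  have hq_pos := ENNReal.toReal_pos hq₀ hq
  obtain ⟨C, hC, hint⟩ := exists_setLIntegral_bd_rpow_le n d A (mul_pos hq_pos ht) hL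
  refine ⟨C ^ (1 / q.toReal), by finiteness, fun Ω hΩ hΓ x hx R hR hdiam Ψ hΨ hΨR => ?_⟩
  have hnorm := eLpNorm_mul_bd_rpow_bdMeasure hΩ ⟨x, hx⟩ hΨ (hΨR.trans inter_subset_left) d t hq₀ hq
    fun _ => 1
  simp only [one_mul, ENNReal.one_rpow] at hnorm
  calc eLpNorm (fun y => ENNReal.ofReal (bd Ω y) ^ t) q ((bdMeasure Ω d).restrict Ψ)
      = (∫⁻ y in Ψ, ENNReal.ofReal (bd Ω y) ^ (d - n + q.toReal * t)) ^ (1 / q.toReal) := hnorm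
    _ ≤ (C * ENNReal.ofReal R ^ (d + q.toReal * t)) ^ (1 / q.toReal) := by
        gcongr
        exact (lintegral_mono_set hΨR).trans (hint Ω hΩ hΓ x hx R hR hdiam)
    _ = C ^ (1 / q.toReal) * ENNReal.ofReal R ^ (d / q.toReal + t) := by
        rw [ENNReal.mul_rpow_of_nonneg _ _ (by positivity), ← ENNReal.rpow_mul]
        congr 2
        field_simp

theorem exists_avNormOn_le_of_exponent_lt (n : ℕ) (d A : ℝ) {c ς s L : ℝ} {β p : ℝ≥0∞}
    {V : Type*} [NormedAddCommGroup V] (hc1 : c ≤ 1) (hL : 0 < L) (hβ₀ : β ≠ 0) (hβp : β < p)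
    (hςs : ς < s) :
    ∃ C : ℝ≥0∞, C ≠ ⊤ ∧ ∀ Ω : Set (Euc n), IsOpen Ω → AhlforsRegular d A (frontier Ω) →
      ∀ x ∈ frontier Ω, ∀ R : ℝ, 0 < R →
        ENNReal.ofReal R ≤ ENNReal.ofReal L * Metric.ediam (frontier Ω) →
          ∀ Ψ : Set (Euc n), MeasurableSet Ψ → Ψ ⊆ Ω ∩ ball x R →
            ∀ F : Euc n → V, AEStronglyMeasurable F (volume.restrict Ω) →
              avNormOn Ω Ψ d c β β ς F ≤
                C * ENNReal.ofReal R ^ (d / β.toReal - d / p.toReal - ς + s) *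
                  avNormOn Ω Ψ d c β p s F := by
  obtain ⟨q, hq₀, hq, hq_inv, hβpq⟩ := exists_holderTriple_of_lt hβ₀ hβp
  obtain ⟨C, hC, hweight⟩ := exists_eLpNorm_bd_rpow_le n d A (sub_pos.2 hςs) hL hq₀ hq
  refine ⟨C, hC, fun Ω hΩ hΓ x hx R hR hdiam Ψ hΨ hΨR F hF => ?_⟩
  have hΨΩ : Ψ ⊆ Ω := hΨR.trans inter_subset_left
  have hexp : d / q.toReal + (s - ς) = d / β.toReal - d / p.toReal - ς + s := by
    rw [div_eq_mul_inv, hq_inv]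
    ring
  calc avNormOn Ω Ψ d c β β ς F
      ≤ avNormOn Ω Ψ d c β p s F *
          eLpNorm (fun y => ENNReal.ofReal (bd Ω y) ^ (s - ς)) q ((bdMeasure Ω d).restrict Ψ) :=
        avNormOn_le_avNormOn_mul_eLpNorm_bd_rpow hΩ ⟨x, hx⟩ hc1 hΨ hΨΩ d ς s hβ₀ hβp.ne_top
          (pos_of_gt hβp).ne' hF
    _ ≤ avNormOn Ω Ψ d c β p s F * (C * ENNReal.ofReal R ^ (d / q.toReal + (s - ς))) := by
        gcongr
        exact hweight Ω hΩ hΓ x hx R hR hdiam Ψ hΨ hΨR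
    _ = _ := by rw [mul_comm, hexp]

theorem exists_avNormOn_le (n : ℕ) (d A : ℝ) {c ς s L : ℝ} {β p : ℝ≥0∞} {V : Type*}
    [NormedAddCommGroup V] (hc1 : c ≤ 1) (hL : 0 < L) (hβ₀ : β ≠ 0)
    (hcase : (β = p ∧ ς ≤ s) ∨ (β < p ∧ ς < s)) :
    ∃ C : ℝ≥0∞, C ≠ ⊤ ∧ ∀ Ω : Set (Euc n), IsOpen Ω → AhlforsRegular d A (frontier Ω) →
      ∀ x ∈ frontier Ω, ∀ R : ℝ, 0 < R →
        ENNReal.ofReal R ≤ ENNReal.ofReal L * Metric.ediam (frontier Ω) →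
          ∀ Ψ : Set (Euc n), MeasurableSet Ψ → Ψ ⊆ Ω ∩ ball x R →
            ∀ F : Euc n → V, AEStronglyMeasurable F (volume.restrict Ω) →
              avNormOn Ω Ψ d c β β ς F ≤
                C * ENNReal.ofReal R ^ (d / β.toReal - d / p.toReal - ς + s) *
                  avNormOn Ω Ψ d c β p s F := by
  rcases hcase with ⟨rfl, hςs⟩ | ⟨hβp, hςs⟩
  · refine ⟨1, ENNReal.one_ne_top, fun Ω hΩ _ x hx R hR _ Ψ hΨ hΨR F _ => ?_⟩
    have hδ : ∀ y ∈ Ψ, bd Ω y ∈ Ioc 0 R := fun y hy =>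
      ⟨bd_pos hΩ ⟨x, hx⟩ (hΨR hy).1, bd_le_of_mem_ball hx (hΨR hy).2⟩
    rw [one_mul, show d / β.toReal - d / β.toReal - ς + s = s - ς by ring]
    exact avNormOn_le_rpow_mul_avNormOn hR hΨ hδ hςs d c β hβ₀ F
  · exact exists_avNormOn_le_of_exponent_lt n d A hc1 hL hβ₀ hβp hςs

end WeightedNorms

theorem statement_10_general (n : ℕ) (d A₀ : ℝ) {c ς s L : ℝ} {β p : ℝ≥0∞} (hc : 0 < c)
    (hc1 : c < 1) (hL : 0 < L) (hβ₀ : β ≠ 0) (hcase : (β = p ∧ ς ≤ s) ∨ (β < p ∧ ς < s)) :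
    ∃ C : ℝ, 0 < C ∧ ∀ Ω : Set (Euc n), IsOpen Ω → AhlforsRegular d A₀ (frontier Ω) →
      ∀ x ∈ frontier Ω, ∀ ϱ r : ℝ, 0 < r →
        ENNReal.ofReal r ≤ ENNReal.ofReal L * Metric.ediam (frontier Ω) →
          ∀ F : Euc n → ℝ, AEStronglyMeasurable F (volume.restrict Ω) →
            wLb Ω ((Ω ∩ ball x r) \ ball x ϱ) d β ς F ≤
              ENNReal.ofReal (C * r ^ (d / β.toReal - d / p.toReal - ς + s)) *
                avNormOn Ω ((Ω ∩ ball x (r / (1 - c))) \ ball x (ϱ / (1 + c))) d c β p s F := by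
  have hc' : 0 < (1 - c)⁻¹ := inv_pos.2 (sub_pos.2 hc1)
  obtain ⟨K, hK, hunav⟩ := exists_wLb_le_avNormOn n d ς hc hc1 hβ₀
  obtain ⟨C, hC, hav⟩ := exists_avNormOn_le n d A₀ (V := ℝ) hc1.le (mul_pos hc' hL) hβ₀ hcase
  set e : ℝ := d / β.toReal - d / p.toReal - ς + s
  have hce := ofReal_rpow_ne_top hc' e
  set M : ℝ≥0∞ := K * (C * ENNReal.ofReal (1 - c)⁻¹ ^ e)
  obtain ⟨B, hB, hMB⟩ := exists_pos_le_ofReal (M := M) (by finiteness)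
  refine ⟨B, hB, fun Ω hΩ hΓ x hx ϱ r hr hdiam F hF => ?_⟩
  set S := (Ω ∩ ball x r) \ ball x ϱ
  set Ψ := (Ω ∩ ball x (r / (1 - c))) \ ball x (ϱ / (1 + c))
  have hSΩ : S ⊆ Ω := sdiff_subset.trans inter_subset_left
  have hΨΩ : Ψ ⊆ Ω := sdiff_subset.trans inter_subset_left
  have hS : MeasurableSet S := (hΩ.measurableSet.inter measurableSet_ball).diff measurableSet_ball
  have hΨ : MeasurableSet Ψ := (hΩ.measurableSet.inter measurableSet_ball).diff measurableSet_ball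
  have hR : r / (1 - c) = (1 - c)⁻¹ * r := div_eq_inv_mul r (1 - c)
  have hdiam' : ENNReal.ofReal (r / (1 - c)) ≤
      ENNReal.ofReal ((1 - c)⁻¹ * L) * Metric.ediam (frontier Ω) := by
    rw [hR, ENNReal.ofReal_mul hc'.le, ENNReal.ofReal_mul hc'.le, mul_assoc]
    gcongr
  calc wLb Ω S d β ς F
      ≤ K * avNormOn Ω Ψ d c β β ς F := hunav Ω hΩ ⟨x, hx⟩ S Ψ hS hSΩ hΨ hΨΩ
        (fun z hz => ball_subset_annulus hΩ hx hc hc1 hz) F hF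
    _ ≤ K * (C * ENNReal.ofReal (r / (1 - c)) ^ e * avNormOn Ω Ψ d c β p s F) := by
        gcongr
        exact hav Ω hΩ hΓ x hx _ (by rw [hR]; positivity) hdiam' Ψ hΨ sdiff_subset F hF
    _ = M * ENNReal.ofReal r ^ e * avNormOn Ω Ψ d c β p s F := by
        rw [hR, ofReal_mul_rpow hc'.le]
        ring
    _ ≤ ENNReal.ofReal (B * r ^ e) * avNormOn Ω Ψ d c β p s F := by
        rw [ENNReal.ofReal_mul hB.le, ENNReal.ofReal_rpow_of_pos hr]
        gcongr

/-- Lemma: from averaged to unaveraged bounds near the boundary. -/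
theorem statement_10 (n : ℕ) (d A₀ c ς s : ℝ) (β p : ℝ≥0∞)
    (hd0 : 0 < d) (hdn : d < n) (hc : 0 < c) (hc1 : c < 1)
    (hcase : (1 ≤ β ∧ β = p ∧ ς ≤ s) ∨ (1 ≤ β ∧ β < p ∧ ς < s)) :
    ∃ C : ℝ, 0 < C ∧
      ∀ Ω : Set (Euc n), IsOpen Ω → Ω.Nonempty → Ω ≠ Set.univ →
        AhlforsRegular d A₀ (frontier Ω) →
        ∀ x ∈ frontier Ω, ∀ ϱ r : ℝ, 0 ≤ ϱ → ϱ < r →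
          ENNReal.ofReal r < 2 * EMetric.diam (frontier Ω) →
          ∀ F : Euc n → ℝ, MemLLoc Ω β F →
            avNormOn Ω ((Ω ∩ Metric.ball x (r / (1 - c))) \ Metric.ball x (ϱ / (1 + c)))
                d c β p s F < ⊤ →
            wLb Ω ((Ω ∩ Metric.ball x r) \ Metric.ball x ϱ) d β ς F ≤
              ENNReal.ofReal (C * r ^ (d / β.toReal - d / p.toReal - ς + s)) *
                avNormOn Ω ((Ω ∩ Metric.ball x (r / (1 - c))) \ Metric.ball x (ϱ / (1 + c)))
                  d c β p s F := by
  obtain ⟨C, hC, h⟩ := statement_10_general n d A₀ (β := β) (p := p) (ς := ς) (s := s) hc hc1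
    two_pos (by rintro rfl; simp at hcase) (hcase.imp And.right And.right)
  exact ⟨C, hC, fun Ω hΩ _ _ hΓ x hx ϱ r hϱ hϱr hdiam F hF _ => h Ω hΩ hΓ x hx ϱ r (hϱ.trans_lt hϱr)
    ((ENNReal.ofReal_ofNat 2).symm ▸ hdiam.le) F hF.1⟩

end Paper
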